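/- arXiv:0901.4277 — 2 statements merged into one kernel-verified Lean document; each statement's English description precedes it below -/
import Mathlib

section
/- Let k be a field, n ≥ 3, and let a_1,...,a_{n-2}, b_1,...,b_{n-2} be nonzero elements of k. The quotient ring R/J of the polynomial ring R = k[l, e_1,...,e_n, s_1,...,s_n] by the ideal J = (g_1,...,g_{n-2}), where g_i = s_i·e_i + a_i·s_{n-1}·e_{n-1} + b_i·s_n·e_n, has Krull dimension n + 3. -/
open MvPolynomial

/-- Index type for the `2n+1` variables `l, e₁,…,eₙ, s₁,…,sₙ` of
`R = k[l, e₁, …, eₙ, s₁, …, sₙ]`. -/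
abbrev CoxVar (n : ℕ) : Type := Unit ⊕ Fin n ⊕ Fin n

/-- The variable `l`. -/
def lVar (n : ℕ) : CoxVar n := Sum.inl ()

/-- The variable `eᵢ` (0-indexed). -/
def eVar {n : ℕ} (i : Fin n) : CoxVar n := Sum.inr (Sum.inl i)

/-- The variable `sᵢ` (0-indexed). -/
def sVar {n : ℕ} (i : Fin n) : CoxVar n := Sum.inr (Sum.inr i)

/-- The quadric trinomial `gᵢ = sᵢ·eᵢ + aᵢ·s_{n-1}·e_{n-1} + bᵢ·sₙ·eₙ`
(1-based indexing as in the paper; here `i : Fin (n-2)` is 0-based). -/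
noncomputable def coxRel (k : Type*) [Field k] (n : ℕ) (hn : 3 ≤ n) (a b : Fin (n - 2) → k)
    (i : Fin (n - 2)) : MvPolynomial (CoxVar n) k :=
  X (sVar (Fin.castLE (by omega) i)) * X (eVar (Fin.castLE (by omega) i))
    + C (a i) * X (sVar ⟨n - 2, by omega⟩) * X (eVar ⟨n - 2, by omega⟩)
    + C (b i) * X (sVar ⟨n - 1, by omega⟩) * X (eVar ⟨n - 1, by omega⟩)

/-!
Lower bound: every maximal ideal of `k[x₁, …, xₘ]` has height `m`, so by Krull's height theorem a
proper ideal with `c` generators has a quotient of dimension at least `m - c`; here this is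
`(2n + 1) - (n - 2) = n + 3`.

Upper bound: modulo `J` every product `sᵢeᵢ` is a linear combination of `s_{n-1}e_{n-1}` and `sₙeₙ`.
Since `sᵢ` and `eᵢ` are the roots of `T² - (sᵢ + eᵢ)T + sᵢeᵢ`, the ring `R/J` is integral over the
subalgebra generated by the `n + 3` elements `l`, `s_{n-1}e_{n-1}`, `sₙeₙ` and `sᵢ + eᵢ`.
-/

section KrullDimension

variable {R σ : Type*} [CommRing R] [IsNoetherianRing R] [Finite σ]

theorem mvPolynomial_height_eq_height_comap_C_add_card [IsJacobsonRing R]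
    (M : Ideal (MvPolynomial σ R)) [M.IsMaximal] :
    M.height = (M.comap C).height + Nat.card σ := by
  induction σ using Finite.induction_empty_option with
  | of_equiv e ih =>
    let φ := (renameEquiv R e).toRingEquiv
    have hcomap : (M.comap φ).comap C = M.comap C := by
      ext r
      simp [φ, Ideal.mem_comap]
    rw [← φ.height_comap M, ih (M.comap φ), hcomap, Nat.card_congr e]
  | h_empty =>
    have hcomap : M.comap (isEmptyRingEquiv R PEmpty).symm = M.comap C := rfl
    rw [← (isEmptyRingEquiv R PEmpty).symm.height_comap M, hcomap, Nat.card_of_isEmpty,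
      Nat.cast_zero, add_zero]
  | @h_option τ _ ih =>
    let φ := (optionEquivLeft R τ).symm.toRingEquiv
    let N := (M.comap φ).comap Polynomial.C
    have : N.IsMaximal := Polynomial.isMaximal_comap_C_of_isJacobsonRing (M.comap φ)
    have : (M.comap φ).LiesOver N := ⟨rfl⟩
    have hcomap : N.comap C = M.comap C := by
      ext r
      simp [φ, N, Ideal.mem_comap]
    rw [← φ.height_comap M, Polynomial.height_eq_height_add_one N, ih N, hcomap,
      Finite.card_option, Nat.cast_succ, add_assoc]

theorem mvPolynomial_height_eq_card_of_isMaximal {k : Type*} [Field k]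
    (M : Ideal (MvPolynomial σ k)) [M.IsMaximal] : M.height = Nat.card σ := by
  have hcomap : M.comap (C : k →+* MvPolynomial σ k) = ⊥ :=
    (Ideal.eq_bot_or_top _).resolve_right (Ideal.IsPrime.ne_top inferInstance)
  rw [mvPolynomial_height_eq_height_comap_C_add_card, hcomap, Ideal.height_bot, zero_add]

theorem card_le_ringKrullDim_mvPolynomial_quotient_add_card {k ι : Type*} [Field k] [Finite ι]
    {g : ι → MvPolynomial σ k} (hg : Ideal.span (Set.range g) ≠ ⊤) :
    (Nat.card σ : WithBot ℕ∞) ≤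
      ringKrullDim (MvPolynomial σ k ⧸ Ideal.span (Set.range g)) + Nat.card ι := by
  obtain ⟨M, hM, hgM⟩ := Ideal.exists_le_maximal _ hg
  have hcard : (Set.range g).encard ≤ Nat.card ι := by
    rw [← (Set.finite_range g).cast_ncard_eq]
    exact_mod_cast Finite.card_range_le g
  calc (Nat.card σ : WithBot ℕ∞) = M.height :=
      congrArg WithBot.some (mvPolynomial_height_eq_card_of_isMaximal M).symm
    _ ≤ ringKrullDim (MvPolynomial σ k ⧸ Ideal.span (Set.range g)) + (Set.range g).encard :=
      Ideal.height_le_ringKrullDim_quotient_add_encard _ (Ideal.span_le.mp hgM)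
    _ ≤ _ := by gcongr; exact_mod_cast hcard

theorem ringKrullDim_adjoin_le_add_ncard {B : Type*} [CommRing B] [Algebra R B] {s : Set B}
    (hs : s.Finite) : ringKrullDim (Algebra.adjoin R s) ≤ ringKrullDim R + s.ncard := by
  have := hs.to_subtype
  rw [Algebra.adjoin_eq_range, ← Nat.card_coe_set_eq, ← ringKrullDim_of_isNoetherianRing]
  exact ringKrullDim_le_of_surjective _ (AlgHom.rangeRestrict_surjective _)

end KrullDimension

section Integral

variable {A B : Type*} [CommRing A] [CommRing B] [Algebra A B]

theorem ringKrullDim_le_of_isIntegral [Algebra.IsIntegral A B] :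
    ringKrullDim B ≤ ringKrullDim A :=
  Order.krullDim_le_of_strictMono (PrimeSpectrum.comap (algebraMap A B)) fun _ _ hPQ ↦
    Ideal.IsIntegral.comap_lt_comap (R := A) hPQ

theorem isIntegral_of_adjoin_eq_top {R : Type*} [CommRing R] [Algebra R A] [Algebra R B]
    [IsScalarTower R A B] {t : Set B} (ht : Algebra.adjoin R t = ⊤)
    (hint : ∀ x ∈ t, IsIntegral A x) : Algebra.IsIntegral A B := by
  have hle : Algebra.adjoin R t ≤ (integralClosure A B).restrictScalars R :=
    Algebra.adjoin_le hint
  exact ⟨fun x ↦ hle (ht ▸ Algebra.mem_top)⟩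

theorem isIntegral_of_add_of_mul {x y : B} (hadd : IsIntegral A (x + y))
    (hmul : IsIntegral A (x * y)) : IsIntegral A x := by
  let s : integralClosure A B := ⟨x + y, hadd⟩
  let p : integralClosure A B := ⟨x * y, hmul⟩
  refine isIntegral_trans (A := integralClosure A B) x ⟨.X ^ 2 - .C s * .X + .C p, ?_, ?_⟩
  · monicity!
  · simp only [Polynomial.eval₂_add, Polynomial.eval₂_sub, Polynomial.eval₂_X_pow,
      Polynomial.eval₂_mul, Polynomial.eval₂_C, Subalgebra.algebraMap_apply, Polynomial.eval₂_X,
      s, p]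
    ring

end Integral

section CoxRing

variable {k : Type*} [Field k] {n : ℕ} (hn : 3 ≤ n) (a b : Fin (n - 2) → k)

/-- The quotient ring `R/J`. -/
abbrev CoxRing : Type _ :=
  MvPolynomial (CoxVar n) k ⧸ Ideal.span (Set.range (coxRel k n hn a b))

/-- The image of a variable of `R` in `R/J`. -/
noncomputable def coxGen (v : CoxVar n) : CoxRing hn a b :=
  Ideal.Quotient.mk _ (X v)

/-- The class of `sᵢeᵢ` in `R/J`. -/
noncomputable def coxProd (i : Fin n) : CoxRing hn a b :=
  coxGen hn a b (sVar i) * coxGen hn a b (eVar i)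

/-- A system of parameters of `R/J`: the classes of `l`, of `s_{n-1}e_{n-1}` and `sₙeₙ`, and of all
the sums `sᵢ + eᵢ`. -/
def coxParams : Set (CoxRing hn a b) :=
  {coxGen hn a b (lVar n), coxProd hn a b ⟨n - 2, by omega⟩, coxProd hn a b ⟨n - 1, by omega⟩} ∪
    Set.range fun i : Fin n ↦ coxGen hn a b (sVar i) + coxGen hn a b (eVar i)

theorem finite_coxParams : (coxParams hn a b).Finite :=
  (Set.toFinite _).union (Set.finite_range _)

theorem ncard_coxParams_le : (coxParams hn a b).ncard ≤ n + 3 := by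
  have hrange := Finite.card_range_le fun i : Fin n ↦
    coxGen hn a b (sVar i) + coxGen hn a b (eVar i)
  rw [Nat.card_coe_set_eq, Nat.card_fin] at hrange
  rw [coxParams, add_comm n]
  grw [Set.ncard_union_le, hrange, Set.ncard_insert_le, Set.ncard_insert_le, Set.ncard_singleton]

theorem adjoin_range_coxGen : Algebra.adjoin k (Set.range (coxGen hn a b)) = ⊤ := by
  have hmk : aeval (coxGen hn a b) = Ideal.Quotient.mkₐ k _ := by
    ext v
    simp [coxGen]
  rw [Algebra.adjoin_range_eq_range_aeval, hmk, AlgHom.range_eq_top]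
  exact Ideal.Quotient.mkₐ_surjective k _

theorem coxProd_castLE (i : Fin (n - 2)) :
    coxProd hn a b (i.castLE (by omega)) =
      -(a i • coxProd hn a b ⟨n - 2, by omega⟩ + b i • coxProd hn a b ⟨n - 1, by omega⟩) := by
  have hrel : Ideal.Quotient.mkₐ k (Ideal.span (Set.range (coxRel k n hn a b)))
      (coxRel k n hn a b i) = 0 :=
    Ideal.Quotient.eq_zero_iff_mem.mpr (Ideal.subset_span ⟨i, rfl⟩)
  simp only [coxRel, C_mul', smul_mul_assoc, map_add, map_mul, map_smul] at hrel
  rw [eq_neg_iff_add_eq_zero, ← add_assoc]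
  exact hrel

theorem coxProd_mem_adjoin (i : Fin n) :
    coxProd hn a b i ∈ Algebra.adjoin k (coxParams hn a b) := by
  have hpenultimate : coxProd hn a b ⟨n - 2, by omega⟩ ∈
      Algebra.adjoin k (coxParams hn a b) := Algebra.subset_adjoin (by simp [coxParams])
  have hlast : coxProd hn a b ⟨n - 1, by omega⟩ ∈
      Algebra.adjoin k (coxParams hn a b) := Algebra.subset_adjoin (by simp [coxParams])
  obtain hi | hi | hi : (i : ℕ) < n - 2 ∨ (i : ℕ) = n - 2 ∨ (i : ℕ) = n - 1 := by omega
  · rw [show i = Fin.castLE (by omega) (⟨i, hi⟩ : Fin (n - 2)) from rfl, coxProd_castLE]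
    exact neg_mem (add_mem (Subalgebra.smul_mem _ hpenultimate _) (Subalgebra.smul_mem _ hlast _))
  · rwa [show i = ⟨n - 2, by omega⟩ from Fin.ext hi]
  · rwa [show i = ⟨n - 1, by omega⟩ from Fin.ext hi]

theorem isIntegral_adjoin_coxParams :
    Algebra.IsIntegral (Algebra.adjoin k (coxParams hn a b)) (CoxRing hn a b) := by
  have hmem {x : CoxRing hn a b} (hx : x ∈ Algebra.adjoin k (coxParams hn a b)) :
      IsIntegral (Algebra.adjoin k (coxParams hn a b)) x :=
    isIntegral_algebraMap (x := (⟨x, hx⟩ : Algebra.adjoin k (coxParams hn a b)))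
  have hadd (i : Fin n) : IsIntegral (Algebra.adjoin k (coxParams hn a b))
      (coxGen hn a b (sVar i) + coxGen hn a b (eVar i)) :=
    hmem (Algebra.subset_adjoin (Set.mem_union_right _ ⟨i, rfl⟩))
  have hmul (i : Fin n) : IsIntegral (Algebra.adjoin k (coxParams hn a b))
      (coxGen hn a b (sVar i) * coxGen hn a b (eVar i)) :=
    hmem (coxProd_mem_adjoin hn a b i)
  refine isIntegral_of_adjoin_eq_top (adjoin_range_coxGen hn a b) ?_
  rintro _ ⟨_ | i | i, rfl⟩
  · exact hmem (Algebra.subset_adjoin (Set.mem_union_left _ (Set.mem_insert _ _)))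
  · exact isIntegral_of_add_of_mul (by rw [add_comm]; exact hadd i) (by rw [mul_comm]; exact hmul i)
  · exact isIntegral_of_add_of_mul (hadd i) (hmul i)

theorem ringKrullDim_coxRing_le : ringKrullDim (CoxRing hn a b) ≤ n + 3 := by
  have := isIntegral_adjoin_coxParams hn a b
  calc ringKrullDim (CoxRing hn a b)
      ≤ ringKrullDim (Algebra.adjoin k (coxParams hn a b)) := ringKrullDim_le_of_isIntegral
    _ ≤ ringKrullDim k + (coxParams hn a b).ncard :=
      ringKrullDim_adjoin_le_add_ncard (finite_coxParams hn a b)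
    _ ≤ n + 3 := by
      rw [ringKrullDim_eq_zero_of_field, zero_add]
      exact_mod_cast ncard_coxParams_le hn a b

theorem span_range_coxRel_ne_top : Ideal.span (Set.range (coxRel k n hn a b)) ≠ ⊤ := by
  have hle : Ideal.span (Set.range (coxRel k n hn a b)) ≤ RingHom.ker constantCoeff := by
    rw [Ideal.span_le]
    rintro _ ⟨i, rfl⟩
    simp [coxRel]
  exact ne_top_of_le_ne_top (RingHom.ker_ne_top _) hle

theorem le_ringKrullDim_coxRing : n + 3 ≤ ringKrullDim (CoxRing hn a b) := by
  have hcard : Nat.card (CoxVar n) = n + 3 + Nat.card (Fin (n - 2)) := by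
    simp only [Nat.card_eq_fintype_card, Fintype.card_sum, Fintype.card_unique, Fintype.card_fin]
    omega
  have hle :=
    card_le_ringKrullDim_mvPolynomial_quotient_add_card (span_range_coxRel_ne_top hn a b)
  rw [hcard, Nat.cast_add, ENat.WithBot.add_le_add_natCast_right_iff] at hle
  exact_mod_cast hle

end CoxRing

theorem stmt3_general (k : Type*) [Field k] (n : ℕ) (hn : 3 ≤ n) (a b : Fin (n - 2) → k) :
    ringKrullDim (MvPolynomial (CoxVar n) k ⧸
        Ideal.span (Set.range (coxRel k n hn a b))) = n + 3 :=
  le_antisymm (ringKrullDim_coxRing_le hn a b) (le_ringKrullDim_coxRing hn a b)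

/-- For `n ≥ 3` and nonzero scalars `aᵢ, bᵢ`, the quotient `R/J` of
`R = k[l, e₁, …, eₙ, s₁, …, sₙ]` by `J = (g₁, …, g_{n-2})` has Krull dimension `n + 3`. -/
theorem stmt3 (k : Type*) [Field k] (n : ℕ) (hn : 3 ≤ n)
    (a b : Fin (n - 2) → k) (ha : ∀ i, a i ≠ 0) (hb : ∀ i, b i ≠ 0) :
    ringKrullDim (MvPolynomial (CoxVar n) k ⧸
        Ideal.span (Set.range (coxRel k n hn a b))) = n + 3 :=
  stmt3_general k n hn a b
end

section
/- Let k be a field, n ≥ 3, and let a_1,...,a_{n-2}, b_1,...,b_{n-2} be nonzero elements of k. Grade R = k[l, e_1,...,e_n, s_1,...,s_n] by ℤ^{n+1} via deg(l) = L − E_1 − ... − E_n, deg(e_i) = E_i, deg(s_i) = L − E_i, where L, E_1,...,E_n is the standard basis of ℤ^{n+1}. Let J = (g_1,...,g_{n-2}) with g_i = s_i·e_i + a_i·s_{n-1}·e_{n-1} + b_i·s_n·e_n (note each g_i is homogeneous of degree L). Then for any non-negative integers d, a_1',...,a_n' with d ≥ a_1' + ... + a_n', the k-vector space spanned by the images in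 R/J of the monomials of multidegree D = dL − a_1'E_1 − ... − a_n'E_n has dimension C(d+2, 2) − Σ_{i=1}^{n} C(a_i' + 1, 2). -/
open MvPolynomial

/-- The class `L` in `ℤ^{n+1}`: the first standard basis vector. -/
def Lcl (n : ℕ) : Fin (n + 1) → ℤ := Pi.single 0 1

/-- The class `Eᵢ` in `ℤ^{n+1}`: the `(i+1)`-st standard basis vector. -/
def Ecl {n : ℕ} (i : Fin n) : Fin (n + 1) → ℤ := Pi.single i.succ 1

/-- The `ℤ^{n+1}`-grading of the variables: `deg l = L − E₁ − ⋯ − Eₙ`,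
`deg eᵢ = Eᵢ`, `deg sᵢ = L − Eᵢ`. -/
def coxDeg (n : ℕ) : CoxVar n → (Fin (n + 1) → ℤ) :=
  Sum.elim (fun _ => Lcl n - ∑ i, Ecl i)
    (Sum.elim (fun i => Ecl i) (fun i => Lcl n - Ecl i))

/-- The multidegree of a monomial exponent vector `m`. -/
def coxMdeg {n : ℕ} (m : CoxVar n →₀ ℕ) : Fin (n + 1) → ℤ :=
  m.sum fun v c => (c : ℤ) • coxDeg n v

/-!
Modulo `J` each product `s i * e i` with `i ≤ n - 2` can be rewritten as a combination of the last
two. The products to be rewritten use pairwise disjoint sets of variables, none of which occurs in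
the replacements, so replacing them all at once is a well-defined `k`-linear normal form map; it
kills `J`, changes no class mod `J`, and fixes the standard monomials, those divisible by none of
the products. Hence the standard monomials of degree `D` are a basis of the degree `D` part of
`R / J`.

A monomial of degree `d * L - ∑ a' i * E i` is uniquely
`l ^ c * ∏ s i ^ (a' i - c)⁺ * e i ^ (c - a' i)⁺ * (s i * e i) ^ r i` with
`∑ r i = d - c - ∑ (a' i - c)⁺`, and it is standard iff `r` lives on the last two indices. This
leaves `d - c - ∑ (a' i - c)⁺ + 1` choices of `r` for each `c ≤ d`, this number being positive
because `∑ a' i ≤ d`, and summing over `c` gives the binomial coefficients.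
-/

section Polynomials

variable {σ k : Type*} [CommSemiring k]

theorem map_mul_eq_mul_of_forall_monomial {f : MvPolynomial σ k →ₗ[k] MvPolynomial σ k}
    {p q : MvPolynomial σ k} (hf : ∀ m, f (monomial m 1 * p) = f (monomial m 1) * q)
    (r : MvPolynomial σ k) : f (r * p) = f r * q := by
  suffices f ∘ₗ LinearMap.mulRight k p = LinearMap.mulRight k q ∘ₗ f from
    LinearMap.congr_fun this r
  exact (basisMonomials σ k).ext fun m => by simpa using hf m

theorem apply_eq_of_mem_support_monomial_mul {s : Set σ} {p : MvPolynomial σ k}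
    (hp : p ∈ supported k s) {m u : σ →₀ ℕ} {c : k} (hu : u ∈ (monomial m c * p).support)
    {v : σ} (hv : v ∉ s) : u v = m v := by
  classical
  obtain ⟨m', hm', t, ht, rfl⟩ := Finset.mem_add.1 (support_mul _ _ hu)
  have tv : t v = 0 := mem_support_notMem_vars_zero ht fun h => hv (mem_supported.1 hp h)
  rw [Finset.mem_singleton.1 (support_monomial_subset hm'), Finsupp.add_apply, tv, add_zero]

end Polynomials

section DisjointPairs

variable {σ ι k : Type*} [CommRing k]

/-- The exponent vector of the monomial `X (x i) * X (y i)`. -/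
noncomputable def pairExponent (x y : ι → σ) (i : ι) : σ →₀ ℕ :=
  Finsupp.single (x i) 1 + Finsupp.single (y i) 1

/-- How often `X (x i) * X (y i)` divides the monomial with exponent vector `m`. A monomial is
standard for the rewriting rules `X (x i) * X (y i) ↦ h i` when this function of `i` is zero. -/
def pairMult (x y : ι → σ) (m : σ →₀ ℕ) (i : ι) : ℕ := min (m (x i)) (m (y i))

/-- The ideal identifying each `X (x i) * X (y i)` with `h i`. -/
noncomputable def pairIdeal (x y : ι → σ) (h : ι → MvPolynomial σ k) : Ideal (MvPolynomial σ k) :=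
  Ideal.span (Set.range fun i => X (x i) * X (y i) - h i)

variable {x y : ι → σ} {h : ι → MvPolynomial σ k}

theorem monomial_pairExponent (i : ι) :
    monomial (pairExponent x y i) (1 : k) = X (x i) * X (y i) := by
  simp [pairExponent, X, monomial_mul]

theorem pairMult_add_single {v : σ} (hv : v ∈ (Set.range x ∪ Set.range y)ᶜ) (m : σ →₀ ℕ) :
    pairMult x y (m + Finsupp.single v 1) = pairMult x y m := by
  simp only [Set.mem_compl_iff, Set.mem_union, Set.mem_range, not_or, not_exists] at hv
  ext i
  simp [pairMult, hv.1 i, hv.2 i]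

theorem pairMult_add_pairExponent [DecidableEq ι]
    (hxy : Function.Injective (Sum.elim x y)) (m : σ →₀ ℕ) (j : ι) :
    pairMult x y (m + pairExponent x y j) = pairMult x y m + Pi.single j 1 := by
  classical
  obtain ⟨hx, hy, hne⟩ := Sum.elim_injective.1 hxy
  ext i
  simp [pairMult, pairExponent, Finsupp.single_apply, hx.eq_iff, hy.eq_iff, hne,
    (hne _ _).symm, min_add_add_right, Pi.single_apply, eq_comm]

section NormalForm

variable [Fintype ι]

/-- The exponent vector left after dividing out all the factors `X (x i) * X (y i)`. -/
noncomputable def pairReduct (x y : ι → σ) (m : σ →₀ ℕ) : σ →₀ ℕ :=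
  m - ∑ i, pairMult x y m i • pairExponent x y i

/-- The normal form map for the rewriting rules `X (x i) * X (y i) ↦ h i`: on a monomial, all
factors `X (x i) * X (y i)` are replaced at once. -/
noncomputable def normalForm (x y : ι → σ) (h : ι → MvPolynomial σ k) :
    MvPolynomial σ k →ₗ[k] MvPolynomial σ k :=
  (basisMonomials σ k).constr k fun m =>
    monomial (pairReduct x y m) 1 * ∏ i, h i ^ pairMult x y m i

theorem normalForm_monomial (m : σ →₀ ℕ) :
    normalForm x y h (monomial m 1) =
      monomial (pairReduct x y m) 1 * ∏ i, h i ^ pairMult x y m i :=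
  (basisMonomials σ k).constr_basis k _ m

theorem normalForm_monomial_of_pairMult_eq_zero {m : σ →₀ ℕ} (hm : pairMult x y m = 0) :
    normalForm x y h (monomial m 1) = monomial m 1 := by
  simp [normalForm_monomial, pairReduct, hm]

theorem sum_smul_pairExponent_apply_left (hxy : Function.Injective (Sum.elim x y))
    (c : ι → ℕ) (j : ι) :
    (∑ i, c i • pairExponent x y i) (x j) = c j := by
  classical
  obtain ⟨hx, -, hne⟩ := Sum.elim_injective.1 hxy
  simp [pairExponent, Finsupp.single_apply, hx.eq_iff, (hne _ _).symm]

theorem sum_smul_pairExponent_apply_right (hxy : Function.Injective (Sum.elim x y))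
    (c : ι → ℕ) (j : ι) :
    (∑ i, c i • pairExponent x y i) (y j) = c j := by
  classical
  obtain ⟨-, hy, hne⟩ := Sum.elim_injective.1 hxy
  simp [pairExponent, Finsupp.single_apply, hy.eq_iff, hne]

theorem sum_pairMult_smul_pairExponent_le (hxy : Function.Injective (Sum.elim x y)) (m : σ →₀ ℕ) :
    ∑ i, pairMult x y m i • pairExponent x y i ≤ m := by
  intro v
  by_cases hvx : v ∈ Set.range x
  · obtain ⟨j, rfl⟩ := hvx
    exact (sum_smul_pairExponent_apply_left hxy _ j).trans_le (min_le_left _ _)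
  by_cases hvy : v ∈ Set.range y
  · obtain ⟨j, rfl⟩ := hvy
    exact (sum_smul_pairExponent_apply_right hxy _ j).trans_le (min_le_right _ _)
  rw [Set.mem_range, not_exists] at hvx hvy
  simp [pairExponent, hvx, hvy]

theorem pairReduct_add_sum (hxy : Function.Injective (Sum.elim x y)) (m : σ →₀ ℕ) :
    pairReduct x y m + ∑ i, pairMult x y m i • pairExponent x y i = m :=
  tsub_add_cancel_of_le (sum_pairMult_smul_pairExponent_le hxy m)

theorem pairMult_pairReduct (hxy : Function.Injective (Sum.elim x y))
    (m : σ →₀ ℕ) : pairMult x y (pairReduct x y m) = 0 := by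
  ext i
  simp only [pairMult, pairReduct, Finsupp.tsub_apply, sum_smul_pairExponent_apply_left hxy,
    sum_smul_pairExponent_apply_right hxy, Pi.zero_apply]
  omega

theorem pairReduct_add_single (hxy : Function.Injective (Sum.elim x y))
    {v : σ} (hv : v ∈ (Set.range x ∪ Set.range y)ᶜ) (m : σ →₀ ℕ) :
    pairReduct x y (m + Finsupp.single v 1) = pairReduct x y m + Finsupp.single v 1 := by
  rw [pairReduct, pairMult_add_single hv,
    ← tsub_add_eq_add_tsub (sum_pairMult_smul_pairExponent_le hxy m), pairReduct]

theorem pairReduct_add_pairExponent (hxy : Function.Injective (Sum.elim x y)) (m : σ →₀ ℕ) (j : ι) :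
    pairReduct x y (m + pairExponent x y j) = pairReduct x y m := by
  classical
  simp [pairReduct, pairMult_add_pairExponent hxy, add_smul, Finset.sum_add_distrib,
    Pi.single_apply, ite_smul, add_tsub_add_eq_tsub_right]

theorem normalForm_mul_pair (hxy : Function.Injective (Sum.elim x y))
    (r : MvPolynomial σ k) (j : ι) :
    normalForm x y h (r * (X (x j) * X (y j))) = normalForm x y h r * h j := by
  classical
  refine map_mul_eq_mul_of_forall_monomial (fun m => ?_) r
  rw [← monomial_pairExponent, monomial_mul, one_mul, normalForm_monomial, normalForm_monomial,
    pairReduct_add_pairExponent hxy, pairMult_add_pairExponent hxy]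
  simp only [Pi.add_apply, pow_add, Finset.prod_mul_distrib, Pi.single_apply, pow_ite, pow_one,
    pow_zero, Finset.prod_ite_eq', Finset.mem_univ, if_true, mul_assoc]

theorem normalForm_mul_X (hxy : Function.Injective (Sum.elim x y))
    {v : σ} (hv : v ∈ (Set.range x ∪ Set.range y)ᶜ) (r : MvPolynomial σ k) :
    normalForm x y h (r * X v) = normalForm x y h r * X v := by
  refine map_mul_eq_mul_of_forall_monomial (fun m => ?_) r
  rw [← pow_one (X v), ← monomial_add_single, normalForm_monomial, normalForm_monomial,
    pairReduct_add_single hxy hv, pairMult_add_single hv, monomial_add_single, mul_right_comm]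

theorem normalForm_mul_of_mem_supported (hxy : Function.Injective (Sum.elim x y))
    {p : MvPolynomial σ k}
    (hp : p ∈ supported k (Set.range x ∪ Set.range y)ᶜ) (r : MvPolynomial σ k) :
    normalForm x y h (r * p) = normalForm x y h r * p := by
  rw [supported_eq_adjoin_X] at hp
  induction hp using Algebra.adjoin_induction generalizing r with
  | mem _ hX =>
    obtain ⟨v, hv, rfl⟩ := hX
    exact normalForm_mul_X hxy hv r
  | algebraMap c =>
    simp only [mul_comm _ (algebraMap k _ c), ← Algebra.smul_def, map_smul]
  | add p q _ _ hp hq => simp only [mul_add, map_add, hp, hq]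
  | mul p q _ _ hp hq => rw [← mul_assoc, hq, hp, mul_assoc]

theorem mk_normalForm (hxy : Function.Injective (Sum.elim x y)) (r : MvPolynomial σ k) :
    Ideal.Quotient.mkₐ k (pairIdeal x y h) (normalForm x y h r) =
      Ideal.Quotient.mkₐ k (pairIdeal x y h) r := by
  suffices (Ideal.Quotient.mkₐ k (pairIdeal x y h)).toLinearMap ∘ₗ normalForm x y h =
      (Ideal.Quotient.mkₐ k (pairIdeal x y h)).toLinearMap from LinearMap.congr_fun this r
  refine (basisMonomials σ k).ext fun m => ?_
  have mk_pair (i : ι) : Ideal.Quotient.mkₐ k (pairIdeal x y h) (h i) =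
      Ideal.Quotient.mkₐ k (pairIdeal x y h) (monomial (pairExponent x y i) 1) := by
    rw [monomial_pairExponent, eq_comm]
    exact Ideal.Quotient.eq.2 (Ideal.subset_span ⟨i, rfl⟩)
  rw [coe_basisMonomials, LinearMap.comp_apply, normalForm_monomial]
  simp only [AlgHom.toLinearMap_apply, map_mul, map_prod, map_pow, mk_pair]
  simp only [← map_pow, ← map_prod, ← map_mul, monomial_pow, one_pow, ← monomial_sum_one,
    monomial_mul, one_mul, pairReduct_add_sum hxy]

theorem isWeightedHomogeneous_normalForm_monomial (hxy : Function.Injective (Sum.elim x y))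
    {M : Type*} [AddCommMonoid M] {w : σ → M}
    (hw : ∀ i, IsWeightedHomogeneous w (h i) (w (x i) + w (y i))) (m : σ →₀ ℕ) :
    IsWeightedHomogeneous w (normalForm x y h (monomial m 1)) (Finsupp.weight w m) := by
  have weight_eq : Finsupp.weight w m = Finsupp.weight w (pairReduct x y m) +
      ∑ i, pairMult x y m i • (w (x i) + w (y i)) := by
    conv_lhs => rw [← pairReduct_add_sum hxy m]
    simp [pairExponent, Finsupp.weight_single]
  rw [weight_eq, normalForm_monomial]
  exact (isWeightedHomogeneous_monomial w _ 1 rfl).mul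
    (IsWeightedHomogeneous.prod _ _ _ fun i _ => (hw i).pow _)

theorem normalForm_eq_zero_of_mem_pairIdeal (hxy : Function.Injective (Sum.elim x y))
    (hh : ∀ i, h i ∈ supported k (Set.range x ∪ Set.range y)ᶜ)
    {r : MvPolynomial σ k} (hr : r ∈ pairIdeal x y h) :
    normalForm x y h r = 0 := by
  obtain ⟨c, rfl⟩ := (Submodule.mem_span_range_iff_exists_fun _).1 hr
  simp only [map_sum, smul_eq_mul, mul_sub, map_sub, normalForm_mul_pair hxy,
    normalForm_mul_of_mem_supported hxy (hh _), sub_self, Finset.sum_const_zero]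

theorem pairMult_eq_zero_of_mem_support_normalForm (hxy : Function.Injective (Sum.elim x y))
    (hh : ∀ i, h i ∈ supported k (Set.range x ∪ Set.range y)ᶜ) {m u : σ →₀ ℕ}
    (hu : u ∈ (normalForm x y h (monomial m 1)).support) : pairMult x y u = 0 := by
  have prod_mem : ∏ i, h i ^ pairMult x y m i ∈ supported k (Set.range x ∪ Set.range y)ᶜ :=
    Subalgebra.prod_mem _ fun i _ => Subalgebra.pow_mem _ (hh i) _
  rw [normalForm_monomial] at hu
  ext i
  rw [pairMult, apply_eq_of_mem_support_monomial_mul prod_mem hu (by simp),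
    apply_eq_of_mem_support_monomial_mul prod_mem hu (by simp)]
  exact congrFun (pairMult_pairReduct hxy m) i

end NormalForm

section Quotient

variable [Finite ι]

theorem injective_mk_domRestrict_restrictSupport
    (hxy : Function.Injective (Sum.elim x y))
    (hh : ∀ i, h i ∈ supported k (Set.range x ∪ Set.range y)ᶜ)
    {S : Set (σ →₀ ℕ)} (hS : ∀ m ∈ S, pairMult x y m = 0) :
    Function.Injective ((Ideal.Quotient.mkₐ k (pairIdeal x y h)).toLinearMap.domRestrict
      (restrictSupport k S)) := by
  cases nonempty_fintype ι
  have normalForm_eq_self : ∀ r ∈ restrictSupport k S, normalForm x y h r = r := by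
    rw [restrictSupport_eq_span]
    refine LinearMap.eqOn_span (g := LinearMap.id) ?_
    rintro _ ⟨m, hm, rfl⟩
    exact normalForm_monomial_of_pairMult_eq_zero (hS m hm)
  rw [injective_iff_map_eq_zero]
  rintro ⟨r, hr⟩ hr0
  have hrJ : r ∈ pairIdeal x y h := Ideal.Quotient.eq_zero_iff_mem.1 hr0
  ext1
  exact (normalForm_eq_self r hr).symm.trans (normalForm_eq_zero_of_mem_pairIdeal hxy hh hrJ)

variable {M : Type*} [AddCommMonoid M] {w : σ → M}

theorem map_mk_restrictSupport_weight (hxy : Function.Injective (Sum.elim x y))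
    (hh : ∀ i, h i ∈ supported k (Set.range x ∪ Set.range y)ᶜ)
    (hw : ∀ i, IsWeightedHomogeneous w (h i) (w (x i) + w (y i))) (D : M) :
    (restrictSupport k {m | Finsupp.weight w m = D}).map
        (Ideal.Quotient.mkₐ k (pairIdeal x y h)).toLinearMap =
      (restrictSupport k {m | Finsupp.weight w m = D ∧ pairMult x y m = 0}).map
        (Ideal.Quotient.mkₐ k (pairIdeal x y h)).toLinearMap := by
  cases nonempty_fintype ι
  refine le_antisymm ?_ (Submodule.map_mono (restrictSupport_mono k fun m hm => hm.1))
  rw [restrictSupport_eq_span, Submodule.map_span_le]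
  rintro _ ⟨m, hm, rfl⟩
  refine ⟨normalForm x y h (monomial m 1), fun u hu => ⟨?_, ?_⟩, mk_normalForm hxy _⟩
  · exact (isWeightedHomogeneous_normalForm_monomial hxy hw m (mem_support_iff.1 hu)).trans hm
  · exact pairMult_eq_zero_of_mem_support_normalForm hxy hh hu

theorem finrank_span_mk_monomial_weight_eq [Nontrivial k]
    (hxy : Function.Injective (Sum.elim x y))
    (hh : ∀ i, h i ∈ supported k (Set.range x ∪ Set.range y)ᶜ)
    (hw : ∀ i, IsWeightedHomogeneous w (h i) (w (x i) + w (y i))) (D : M) :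
    Module.finrank k (Submodule.span k
      ((fun m => Ideal.Quotient.mk (pairIdeal x y h) (monomial m (1 : k))) ''
        {m | Finsupp.weight w m = D})) =
      {m | Finsupp.weight w m = D ∧ pairMult x y m = 0}.ncard := by
  have span_eq : Submodule.span k
      ((fun m => Ideal.Quotient.mk (pairIdeal x y h) (monomial m (1 : k))) ''
        {m | Finsupp.weight w m = D}) = (restrictSupport k {m | Finsupp.weight w m = D}).map
        (Ideal.Quotient.mkₐ k (pairIdeal x y h)).toLinearMap := by
    rw [restrictSupport_eq_span, Submodule.map_span, Set.image_image]
    rfl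
  rw [span_eq, map_mk_restrictSupport_weight hxy hh hw, ← LinearMap.range_domRestrict,
    LinearMap.finrank_range_of_inj
      (injective_mk_domRestrict_restrictSupport hxy hh fun m hm => hm.2),
    Module.finrank_eq_nat_card_basis (basisRestrictSupport k _), Nat.card_coe_set_eq]

end Quotient

end DisjointPairs

theorem comp_eq_zero_iff_exists_single_add_single {α ι M : Type*} [DecidableEq α]
    [AddZeroClass M] {j : ι → α} {p q : α} (hpq : p ≠ q) (hj : Set.range j = {p, q}ᶜ)
    {r : α → M} : r ∘ j = 0 ↔ ∃ u v, r = Pi.single p u + Pi.single q v := by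
  have comp_eq_zero_iff : r ∘ j = 0 ↔ ∀ i ∈ ({p, q} : Set α)ᶜ, r i = 0 := by
    rw [← hj, Set.forall_mem_range, funext_iff]
    rfl
  rw [comp_eq_zero_iff]
  constructor
  · intro hr
    refine ⟨r p, r q, funext fun i => ?_⟩
    by_cases hi : i ∈ ({p, q} : Set α)
    · rcases hi with rfl | rfl <;> simp [hpq, hpq.symm]
    · simp_all
  · rintro ⟨u, v, rfl⟩ i hi
    simp_all

section Counting

theorem sum_range_tsub_eq_choose {N x : ℕ} (h : x ≤ N) :
    ∑ c ∈ Finset.range N, (x - c) = (x + 1).choose 2 := by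
  induction x generalizing N with
  | zero => simp
  | succ x ih =>
    obtain ⟨N, rfl⟩ : ∃ M, N = M + 1 := ⟨N - 1, by omega⟩
    rw [Finset.sum_range_succ', Nat.choose_succ_succ' (x + 1) 1, ← ih (Nat.le_of_succ_le_succ h)]
    simp [add_comm]

theorem add_sum_tsub_le {ι : Type*} {s : Finset ι} {f : ι → ℕ} {c d : ℕ} (hd : ∑ i ∈ s, f i ≤ d)
    (hc : c ≤ d) : c + ∑ i ∈ s, (f i - c) ≤ d := by
  classical
  by_cases h : ∀ i ∈ s, f i ≤ c
  · rwa [Finset.sum_eq_zero fun i hi => tsub_eq_zero_of_le (h i hi)]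
  · push Not at h
    obtain ⟨j, hj, hcj⟩ := h
    rw [← Finset.add_sum_erase _ _ hj] at hd ⊢
    have erase_le : ∑ i ∈ s.erase j, (f i - c) ≤ ∑ i ∈ s.erase j, f i :=
      Finset.sum_le_sum fun i _ => tsub_le_self
    omega

theorem sum_range_tsub_sum_tsub_add_one {ι : Type*} {s : Finset ι} {f : ι → ℕ} {d : ℕ}
    (hd : ∑ i ∈ s, f i ≤ d) :
    ∑ c ∈ Finset.range (d + 1), (d - c - ∑ i ∈ s, (f i - c) + 1) +
      ∑ i ∈ s, (f i + 1).choose 2 = (d + 2).choose 2 := by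
  have f_le (i) (hi : i ∈ s) : f i ≤ d + 1 :=
    (Finset.single_le_sum (fun _ _ => Nat.zero_le _) hi).trans (hd.trans d.le_succ)
  calc
    _ = ∑ c ∈ Finset.range (d + 1), (d - c - ∑ i ∈ s, (f i - c) + 1) +
          ∑ c ∈ Finset.range (d + 1), ∑ i ∈ s, (f i - c) := by
      rw [Finset.sum_comm, Finset.sum_congr rfl fun i hi => sum_range_tsub_eq_choose (f_le i hi)]
    _ = ∑ c ∈ Finset.range (d + 1), (d + 1 - c) := by
      rw [← Finset.sum_add_distrib]
      refine Finset.sum_congr rfl fun c hc => ?_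
      have := add_sum_tsub_le hd (Finset.mem_range_succ_iff.1 hc)
      omega
    _ = (d + 2).choose 2 := sum_range_tsub_eq_choose le_rfl

end Counting

section Cox

variable {n : ℕ}

section Exponents

theorem coxMdeg_eq_weight (m : CoxVar n →₀ ℕ) : coxMdeg m = Finsupp.weight (coxDeg n) m := by
  simp [coxMdeg, Finsupp.weight_apply]

theorem coxMdeg_apply_zero (m : CoxVar n →₀ ℕ) :
    coxMdeg m 0 = m (lVar n) + ∑ i, (m (sVar i) : ℤ) := by
  simp [coxMdeg_eq_weight, Finsupp.weight_eq_sum, coxDeg, Lcl, Ecl, lVar, sVar]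

theorem coxMdeg_apply_succ (m : CoxVar n →₀ ℕ) (i : Fin n) :
    coxMdeg m i.succ = m (eVar i) - m (lVar n) - (m (sVar i) : ℤ) := by
  simp [coxMdeg_eq_weight, Finsupp.weight_eq_sum, coxDeg, Lcl, Ecl, lVar, sVar, eVar,
    Pi.single_apply, sub_eq_add_neg, add_assoc, add_left_comm]

theorem coxMdeg_eq_iff {m : CoxVar n →₀ ℕ} {d : ℕ} {a' : Fin n → ℕ} :
    coxMdeg m = (d : ℤ) • Lcl n - ∑ i, (a' i : ℤ) • Ecl i ↔
      m (lVar n) + ∑ i, m (sVar i) = d ∧ ∀ i, m (lVar n) + m (sVar i) = m (eVar i) + a' i := by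
  have class_apply_zero : ((d : ℤ) • Lcl n - ∑ i, (a' i : ℤ) • Ecl i) 0 = d := by
    simp [Lcl, Ecl]
  have class_apply_succ (i : Fin n) :
      ((d : ℤ) • Lcl n - ∑ i, (a' i : ℤ) • Ecl i) i.succ = -a' i := by
    simp [Lcl, Ecl, Pi.single_apply]
  rw [funext_iff, Fin.forall_fin_succ, coxMdeg_apply_zero, class_apply_zero]
  refine and_congr ?_ (forall_congr' fun i => ?_)
  · norm_cast
  · rw [coxMdeg_apply_succ, class_apply_succ]
    omega

/-- The exponent vector of `l ^ c * ∏ i, s i ^ (a' i - c) * e i ^ (c - a' i) * (s i * e i) ^ r i`,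
with truncated subtractions. The monomials whose degree has `E`-part `-∑ i, a' i * E i` are
uniquely of this form. -/
noncomputable def coxExponent (a' : Fin n → ℕ) (c : ℕ) (r : Fin n → ℕ) : CoxVar n →₀ ℕ :=
  Finsupp.equivFunOnFinite.symm
    (Sum.elim (fun _ => c) (Sum.elim (fun i => c - a' i + r i) (fun i => a' i - c + r i)))

variable {a' : Fin n → ℕ} {c : ℕ} {r : Fin n → ℕ}

theorem coxExponent_lVar : coxExponent a' c r (lVar n) = c := rfl

theorem coxExponent_eVar (i : Fin n) : coxExponent a' c r (eVar i) = c - a' i + r i := rfl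

theorem coxExponent_sVar (i : Fin n) : coxExponent a' c r (sVar i) = a' i - c + r i := rfl

theorem pairMult_coxExponent {ι : Type*} (j : ι → Fin n) :
    pairMult (sVar ∘ j) (eVar ∘ j) (coxExponent a' c r) = r ∘ j := by
  ext i
  simp only [pairMult, Function.comp_apply, coxExponent_eVar, coxExponent_sVar]
  omega

theorem coxMdeg_coxExponent_iff {d : ℕ} :
    coxMdeg (coxExponent a' c r) = (d : ℤ) • Lcl n - ∑ i, (a' i : ℤ) • Ecl i ↔
      c + ∑ i, (a' i - c) + ∑ i, r i = d := by
  simp only [coxMdeg_eq_iff, coxExponent_lVar, coxExponent_eVar, coxExponent_sVar,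
    Finset.sum_add_distrib, add_assoc, and_iff_left_iff_imp]
  intro _ i
  omega

theorem coxExponent_inj {c' : ℕ} {r' : Fin n → ℕ} :
    coxExponent a' c r = coxExponent a' c' r' ↔ c = c' ∧ r = r' := by
  refine ⟨fun h => ⟨DFunLike.congr_fun h (lVar n), ?_⟩, by rintro ⟨rfl, rfl⟩; rfl⟩
  have pairMult_eq := congrArg (pairMult (sVar ∘ id) (eVar ∘ id)) h
  rwa [pairMult_coxExponent, pairMult_coxExponent] at pairMult_eq

theorem exists_coxExponent_eq {m : CoxVar n →₀ ℕ} {d : ℕ}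
    (hm : coxMdeg m = (d : ℤ) • Lcl n - ∑ i, (a' i : ℤ) • Ecl i) :
    ∃ c r, coxExponent a' c r = m := by
  refine ⟨m (lVar n), pairMult sVar eVar m, ?_⟩
  have degree_succ := (coxMdeg_eq_iff.1 hm).2
  ext (_ | i | i)
  · rfl
  · have := degree_succ i
    change m (lVar n) - a' i + min (m (sVar i)) (m (eVar i)) = m (eVar i)
    omega
  · have := degree_succ i
    change a' i - m (lVar n) + min (m (sVar i)) (m (eVar i)) = m (sVar i)
    omega

variable {ι : Type*} {j : ι → Fin n} {p q : Fin n} {d : ℕ}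

theorem setOf_standard_eq_image (hpq : p ≠ q) (hj : Set.range j = {p, q}ᶜ)
    (hd : ∑ i, a' i ≤ d) :
    {m : CoxVar n →₀ ℕ | coxMdeg m = (d : ℤ) • Lcl n - ∑ i, (a' i : ℤ) • Ecl i ∧
        pairMult (sVar ∘ j) (eVar ∘ j) m = 0} =
      (fun t : Σ _ : ℕ, ℕ × ℕ =>
          coxExponent a' t.1 (Pi.single p t.2.1 + Pi.single q t.2.2)) ''
        (Finset.range (d + 1)).sigma fun c =>
          Finset.HasAntidiagonal.antidiagonal (d - c - ∑ i, (a' i - c)) := by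
  have mem_sigma_iff (c u v : ℕ) : c ≤ d ∧ u + v = d - c - ∑ i, (a' i - c) ↔
      c + ∑ i, (a' i - c) + (u + v) = d := by
    have := @add_sum_tsub_le _ Finset.univ a' c d hd
    omega
  ext m
  simp only [Set.mem_ofPred_eq, Set.mem_image, Finset.mem_coe, Finset.mem_sigma,
    Finset.mem_range_succ_iff, Finset.HasAntidiagonal.mem_antidiagonal, Sigma.exists, Prod.exists,
    mem_sigma_iff]
  constructor
  · rintro ⟨hdeg, hstd⟩
    obtain ⟨c, r, rfl⟩ := exists_coxExponent_eq hdeg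
    rw [pairMult_coxExponent, comp_eq_zero_iff_exists_single_add_single hpq hj] at hstd
    obtain ⟨u, v, rfl⟩ := hstd
    exact ⟨c, u, v, by simpa [Finset.sum_add_distrib] using coxMdeg_coxExponent_iff.1 hdeg, rfl⟩
  · rintro ⟨c, u, v, hsum, rfl⟩
    refine ⟨coxMdeg_coxExponent_iff.2 (by simpa [Finset.sum_add_distrib] using hsum), ?_⟩
    rw [pairMult_coxExponent, comp_eq_zero_iff_exists_single_add_single hpq hj]
    exact ⟨u, v, rfl⟩

theorem coxExponent_single_add_single_injective (hpq : p ≠ q) :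
    Function.Injective fun t : Σ _ : ℕ, ℕ × ℕ =>
      coxExponent a' t.1 (Pi.single p t.2.1 + Pi.single q t.2.2) := by
  rintro ⟨c, u, v⟩ ⟨c', u', v'⟩ h
  obtain ⟨rfl, hr⟩ := coxExponent_inj.1 h
  obtain rfl : u = u' := by simpa [hpq] using congrFun hr p
  obtain rfl : v = v' := by simpa [hpq.symm] using congrFun hr q
  rfl

theorem ncard_setOf_standard (hpq : p ≠ q) (hj : Set.range j = {p, q}ᶜ) (hd : ∑ i, a' i ≤ d) :
    ({m : CoxVar n →₀ ℕ | coxMdeg m = (d : ℤ) • Lcl n - ∑ i, (a' i : ℤ) • Ecl i ∧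
        pairMult (sVar ∘ j) (eVar ∘ j) m = 0}.ncard : ℤ) =
      ((d + 2).choose 2 : ℤ) - ∑ i, ((a' i + 1).choose 2 : ℤ) := by
  rw [setOf_standard_eq_image hpq hj hd,
    Set.ncard_image_of_injective _ (coxExponent_single_add_single_injective hpq),
    Set.ncard_coe_finset, Finset.card_sigma, ← sum_range_tsub_sum_tsub_add_one hd]
  simp

end Exponents

section Relations

theorem coxDeg_sVar_add_coxDeg_eVar (i : Fin n) :
    coxDeg n (sVar i) + coxDeg n (eVar i) = Lcl n := by
  simp [coxDeg, sVar, eVar]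

variable {k ι : Type*} [CommRing k]

/-- The polynomial `-(a * s p * e p + b * s q * e q)` that replaces a product `s i * e i`. -/
noncomputable def coxReplacement (p q : Fin n) (a b : k) : MvPolynomial (CoxVar n) k :=
  -(C a * X (sVar p) * X (eVar p) + C b * X (sVar q) * X (eVar q))

variable {p q : Fin n} {j : ι → Fin n}

theorem isWeightedHomogeneous_coxReplacement (a b : k) :
    IsWeightedHomogeneous (coxDeg n) (coxReplacement p q a b) (Lcl n) := by
  have homogeneous_term (c : k) (i : Fin n) : IsWeightedHomogeneous (coxDeg n)
      (C c * X (sVar i) * X (eVar i) : MvPolynomial (CoxVar n) k) (Lcl n) := by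
    rw [← coxDeg_sVar_add_coxDeg_eVar i]
    exact ((isWeightedHomogeneous_X k _ _).C_mul c).mul (isWeightedHomogeneous_X k _ _)
  exact ((homogeneous_term a p).add (homogeneous_term b q)).neg

theorem coxReplacement_mem_supported (hrange : Set.range j = {p, q}ᶜ) (a b : k) :
    coxReplacement p q a b ∈
      supported k (Set.range (sVar ∘ j) ∪ Set.range (eVar ∘ j))ᶜ := by
  have X_mem {v : CoxVar n} (hv : v ∈ (Set.range (sVar ∘ j) ∪ Set.range (eVar ∘ j))ᶜ) :
      X v ∈ supported k (Set.range (sVar ∘ j) ∪ Set.range (eVar ∘ j))ᶜ :=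
    Algebra.subset_adjoin ⟨v, hv, rfl⟩
  have term_mem (c : k) {i : Fin n} (hi : i ∉ Set.range j) : C c * X (sVar i) * X (eVar i) ∈
      supported k (Set.range (sVar ∘ j) ∪ Set.range (eVar ∘ j))ᶜ := by
    refine mul_mem (mul_mem (Subalgebra.algebraMap_mem _ c) (X_mem ?_)) (X_mem ?_) <;>
      simpa [sVar, eVar] using hi
  exact neg_mem (add_mem (term_mem a (by simp [hrange])) (term_mem b (by simp [hrange])))

theorem sumElim_sVar_eVar_injective (hj : Function.Injective j) :
    Function.Injective (Sum.elim (sVar ∘ j) (eVar ∘ j)) :=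
  Sum.elim_injective.2 ⟨(Sum.inr_injective.comp Sum.inr_injective).comp hj,
    (Sum.inr_injective.comp Sum.inl_injective).comp hj, by simp [sVar, eVar]⟩

end Relations

end Cox

theorem stmt11_general {k ι : Type*} [CommRing k] [Nontrivial k] {n : ℕ} {p q : Fin n}
    (hpq : p ≠ q) {j : ι → Fin n} (hj : Function.Injective j) (hrange : Set.range j = {p, q}ᶜ)
    (a b : ι → k) {d : ℕ} {a' : Fin n → ℕ} (hd : ∑ i, a' i ≤ d) :
    (Module.finrank k ↥(Submodule.span k
        ((fun m : CoxVar n →₀ ℕ =>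
            Ideal.Quotient.mk (Ideal.span (Set.range fun i =>
                X (sVar (j i)) * X (eVar (j i)) + C (a i) * X (sVar p) * X (eVar p)
                  + C (b i) * X (sVar q) * X (eVar q)))
              (monomial m (1 : k))) ''
          {m : CoxVar n →₀ ℕ |
            coxMdeg m = (d : ℤ) • Lcl n - ∑ i, (a' i : ℤ) • Ecl i})) : ℤ)
      = ((d + 2).choose 2 : ℤ) - ∑ i, ((a' i + 1).choose 2 : ℤ) := by
  have := Finite.of_injective j hj
  have ideal_eq : Ideal.span (Set.range fun i =>
      X (sVar (j i)) * X (eVar (j i)) + C (a i) * X (sVar p) * X (eVar p)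
        + C (b i) * X (sVar q) * X (eVar q)) =
      pairIdeal (sVar ∘ j) (eVar ∘ j) fun i => coxReplacement p q (a i) (b i) := by
    simp only [pairIdeal, coxReplacement, sub_neg_eq_add, add_assoc, Function.comp_apply]
  rw [ideal_eq, ← ncard_setOf_standard hpq hrange hd]
  simp only [coxMdeg_eq_weight]
  exact congrArg _ (finrank_span_mk_monomial_weight_eq (sumElim_sVar_eVar_injective hj)
    (fun i => coxReplacement_mem_supported hrange (a i) (b i))
    (fun i => (coxDeg_sVar_add_coxDeg_eVar (j i)).symm ▸
      isWeightedHomogeneous_coxReplacement (a i) (b i)) _)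

theorem range_castLE_eq_compl_pair {n : ℕ} (hn : 2 ≤ n) :
    Set.range (Fin.castLE (Nat.sub_le n 2)) =
      {(⟨n - 2, by omega⟩ : Fin n), (⟨n - 1, by omega⟩ : Fin n)}ᶜ := by
  ext i
  simp only [Fin.range_castLE, Set.mem_ofPred_eq, Set.mem_compl_iff, Set.mem_insert_iff,
    Set.mem_singleton_iff, Fin.ext_iff]
  omega

/-- For `n ≥ 3`, nonzero scalars `aᵢ, bᵢ`, and any non-negative integers
`d, a₁', …, aₙ'` with `d ≥ a₁' + ⋯ + aₙ'`, the `k`-vector space spanned by the images in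
`R/J` of the monomials of multidegree `D = dL − a₁'E₁ − ⋯ − aₙ'Eₙ` has dimension
`C(d+2, 2) − Σᵢ C(aᵢ'+1, 2)`. -/
theorem stmt11 (k : Type*) [Field k] (n : ℕ) (hn : 3 ≤ n)
    (a b : Fin (n - 2) → k) (ha : ∀ i, a i ≠ 0) (hb : ∀ i, b i ≠ 0)
    (d : ℕ) (a' : Fin n → ℕ) (hd : (∑ i, a' i) ≤ d) :
    (Module.finrank k ↥(Submodule.span k
        ((fun m : CoxVar n →₀ ℕ =>
            Ideal.Quotient.mk (Ideal.span (Set.range (coxRel k n hn a b)))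
              (monomial m (1 : k))) ''
          {m : CoxVar n →₀ ℕ |
            coxMdeg m = (d : ℤ) • Lcl n - ∑ i, (a' i : ℤ) • Ecl i})) : ℤ)
      = ((d + 2).choose 2 : ℤ) - ∑ i, (((a' i) + 1).choose 2 : ℤ) := by
  exact stmt11_general (by rw [Ne, Fin.mk.injEq]; omega) (Fin.castLE_injective _)
    (range_castLE_eq_compl_pair (by omega)) a b hd
end
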